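/- Let q be a prime power and let r, δ, M, N be positive integers with δ > 1, q ≥ N > M > 1, and r + δ - 1 ≤ q. Let a = (α_1,...,α_{r+δ-1}) be a vector of distinct elements of F_q and v = (v_1,...,v_{r+δ-1}) a vector of nonzero elements of F_q. Let C_1 = ⋯ = C_{M-1} = GRS_r(a,v), which is an [r+δ-1, r, δ]_q MDS code, and let C_M = GRS_1(a,v). Let C = (C_1,...,C_M)·A be the matrix-product code, where A is an M×N NSC matrix over F_q. If (r-1)(N-M+1) ≤ δ, then C is an optimal (r,δ)-LRC with parameters [N(r+δ-1), (M-1)r+1, (N-M+1)(r+δ-1)]_q. -/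

import Mathlib

/-!
Fix a codeword built from `(c_1, …, c_M)` and let `c_i` be the last nonzero component. The `N`
symbols lying over a coordinate `t` form the vector `x A` with `x = (c_1(t), …, c_M(t))`, a
combination of the first `i` rows of `A`. If `x ≠ 0` and `x A` vanished in `i` columns, then the
corresponding `i × i` minor of `A` would be zero; hence at least `N - i + 1` of these symbols are
nonzero as soon as `c_i(t) ≠ 0`, and the codeword has weight at least `(N - i + 1) wt(c_i)`.

For `i = M` this is the claimed distance `(N - M + 1)(r + δ - 1)`, since `GRS_1(a, v)` is the line
spanned by the full-weight word `v`. For `i < M` it is at least `(N - M + 2) δ`, which suffices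
exactly when `(r - 1)(N - M + 1) ≤ δ`. Equality occurs at `(x_1 v, …, x_M v)`, where `x ≠ 0` is
chosen so that `x A` vanishes in `M - 1` columns. Since `A` has independent rows, the dimension is
`k = (M - 1) r + 1`, and `⌈k / r⌉ = M` puts the distance on the Singleton-type bound.

Each of the `N` blocks of a codeword lies in `GRS_r(a, v)`, which gives locality. About
`GRS_r(a, v)` only its length, dimension and distance matter, and that it contains a full-weight
word.
-/

namespace LRCPaper

noncomputable section Defs

variable {F : Type} [Field F] [Fintype F] [DecidableEq F]

/-- The punctured code of `C` on the coordinate set `S`: delete all coordinates outside `S`. -/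
def punctureCode {ι : Type} [Fintype ι] (C : Submodule F (ι → F)) (S : Finset ι) :
    Submodule F ({ x // x ∈ S } → F) :=
  C.map (LinearMap.funLeft F F (fun j : { x // x ∈ S } => (j : ι)))

/-- Every nonzero codeword of `C` has Hamming weight at least `δ`
(i.e. the minimum distance of `C` is at least `δ`). -/
def minWtGe {ι : Type} [Fintype ι] (C : Submodule F (ι → F)) (δ : ℕ) : Prop :=
  ∀ c ∈ C, c ≠ 0 → δ ≤ hammingNorm c

/-- The minimum Hamming distance of the linear code `C` is exactly `d`. -/
def minDistIs {ι : Type} [Fintype ι] (C : Submodule F (ι → F)) (d : ℕ) : Prop :=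
  (∃ c ∈ C, c ≠ 0 ∧ hammingNorm c = d) ∧ minWtGe C d

/-- The `i`-th code symbol of `C` has `(r, δ)`-locality. -/
def symbolHasLocality {ι : Type} [Fintype ι] (C : Submodule F (ι → F)) (r δ : ℕ) (i : ι) :
    Prop :=
  ∃ S : Finset ι, i ∈ S ∧ S.card ≤ r + δ - 1 ∧ minWtGe (punctureCode C S) δ

/-- `C` is an `(r, δ)`-locally repairable code. -/
def IsLRC {ι : Type} [Fintype ι] (C : Submodule F (ι → F)) (r δ : ℕ) : Prop :=
  ∀ i : ι, symbolHasLocality C r δ i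

/-- The right-hand side `n - k + 1 - (⌈k/r⌉ - 1)(δ - 1)` of the Singleton-type bound
for `(r, δ)`-LRCs, as an integer. -/
def optBound (n k r δ : ℕ) : ℤ :=
  (n : ℤ) - (k : ℤ) + 1 - (⌈(k : ℚ) / (r : ℚ)⌉ - 1) * ((δ : ℤ) - 1)

/-- `C` is an optimal `(r, δ)`-LRC with parameters `[card ι, k, d]`. -/
def IsOptimalLRC {ι : Type} [Fintype ι] (C : Submodule F (ι → F)) (k d r δ : ℕ) : Prop :=
  IsLRC C r δ ∧ Module.finrank F ↥C = k ∧ minDistIs C d ∧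
    (d : ℤ) = optBound (Fintype.card ι) k r δ

/-- `C` is an optimal `(r, δ)`-LRC (its minimum distance meets the Singleton-type bound). -/
def IsOptimalLRCCode {ι : Type} [Fintype ι] (C : Submodule F (ι → F)) (r δ : ℕ) : Prop :=
  IsLRC C r δ ∧ ∃ d : ℕ, minDistIs C d ∧
    (d : ℤ) = optBound (Fintype.card ι) (Module.finrank F ↥C) r δ

/-- The linear map underlying the matrix-product construction: it sends
`(c_1, …, c_M)` to `(∑_ℓ c_ℓ a_{ℓ,1}, …, ∑_ℓ c_ℓ a_{ℓ,N})`. -/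
def mpMap {ι : Type} [Fintype ι] {M N : ℕ} (A : Matrix (Fin M) (Fin N) F) :
    (Fin M → ι → F) →ₗ[F] (Fin N × ι → F) where
  toFun c := fun p => ∑ ℓ : Fin M, c ℓ p.2 * A ℓ p.1
  map_add' x y := by
    funext p
    simp [add_mul, Finset.sum_add_distrib]
  map_smul' a x := by
    funext p
    simp [Finset.mul_sum, mul_assoc]

/-- The matrix-product code `(C_1, …, C_M) · A`, a linear code of length `N * card ι`
with coordinates indexed by `Fin N × ι`. -/
def matrixProductCode {ι : Type} [Fintype ι] {M N : ℕ}
    (Cs : Fin M → Submodule F (ι → F)) (A : Matrix (Fin M) (Fin N) F) :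
    Submodule F (Fin N × ι → F) :=
  (Submodule.pi Set.univ Cs).map (mpMap A)

/-- The linear code of length `N` generated by the first `i` rows of `A`. -/
def rowSpanCode {M N : ℕ} (A : Matrix (Fin M) (Fin N) F) (i : ℕ) :
    Submodule F (Fin N → F) :=
  Submodule.span F {w : Fin N → F | ∃ ℓ : Fin M, (ℓ : ℕ) < i ∧ w = A ℓ}

/-- `A` is nonsingular by columns (NSC): for every `i ≤ M`, every `i × i` submatrix
formed by choosing `i` columns of the first `i` rows of `A` is nonsingular. -/
def IsNSC {M N : ℕ} (A : Matrix (Fin M) (Fin N) F) : Prop :=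
  ∀ (i : ℕ) (hi : i ≤ M) (f : Fin i → Fin N), StrictMono f →
    (Matrix.of fun a b : Fin i => A (Fin.castLE hi a) (f b)).det ≠ 0

/-- Evaluation map underlying generalized Reed–Solomon codes:
`p ↦ (v_1 p(a_1), …, v_n p(a_n))`. -/
def grsMap {n : ℕ} (a v : Fin n → F) : Polynomial F →ₗ[F] (Fin n → F) where
  toFun p := fun i => v i * Polynomial.eval (a i) p
  map_add' p q := by funext i; simp [mul_add]
  map_smul' c p := by funext i; simp [mul_left_comm]

/-- The generalized Reed–Solomon code `GRS_k(a, v)`. -/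
def GRSCode {n : ℕ} (k : ℕ) (a v : Fin n → F) : Submodule F (Fin n → F) :=
  (Polynomial.degreeLT F k).map (grsMap a v)

/-- The set of indices of nonzero columns of `H`. -/
def colSupport {m n : ℕ} (H : Matrix (Fin m) (Fin n) F) : Finset (Fin n) :=
  Finset.univ.filter fun j => ∃ i, H i j ≠ 0

/-- Entry `(i, j)` (0-based) of the `2(δ-1) × (2m-1)` matrix `Ĥ`, built from the distinct
elements `α 0, …, α (m-1)` and nonzero scalars `lam 0, …, lam (m-1)`. -/
def hatEntry (δ m : ℕ) (α lam : ℕ → F) (i j : ℕ) : F :=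
  if i < δ - 1 then (if j < m then lam j * α j ^ i else 0)
  else (if m - 1 ≤ j then lam (2 * m - 2 - j) * α (2 * m - 2 - j) ^ (i - (δ - 1)) else 0)

/-- Entry `(i, j)` (0-based) of the `v(δ-1) × (vm-1)` block-diagonal matrix
`ℋ = H ⊕ ⋯ ⊕ H ⊕ Ĥ` (`v - 2` diagonal copies of `H` followed by `Ĥ`). -/
def calHEntry (δ m v : ℕ) (α lam : ℕ → F) (i j : ℕ) : F :=
  if i < (v - 2) * (δ - 1) then
    (if j < (v - 2) * m ∧ j / m = i / (δ - 1) then lam (j % m) * α (j % m) ^ (i % (δ - 1))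
      else 0)
  else
    (if (v - 2) * m ≤ j then hatEntry δ m α lam (i - (v - 2) * (δ - 1)) (j - (v - 2) * m)
      else 0)

/-- Entry `(i, j)` (0-based) of the `(v(δ-1)+τ) × (vm-1)` matrix `H̃`, obtained by appending
the row block `(A, …, A, Â)` below `ℋ`. -/
def tildeHEntry (δ m v : ℕ) (α lam : ℕ → F) (i j : ℕ) : F :=
  if i < v * (δ - 1) then calHEntry δ m v α lam i j
  else
    lam (if j < (v - 2) * m then j % m
          else (if j - (v - 2) * m < m then j - (v - 2) * m
                else 2 * m - 2 - (j - (v - 2) * m))) *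
      α (if j < (v - 2) * m then j % m
          else (if j - (v - 2) * m < m then j - (v - 2) * m
                else 2 * m - 2 - (j - (v - 2) * m))) ^
        ((δ - 1) + (i - v * (δ - 1)))

end Defs

section HammingNorm

variable {ι κ R : Type*} [Fintype κ] [Zero R] [DecidableEq R]

theorem hammingNorm_restrict_map (e : κ ↪ ι) (x : ι → R) :
    hammingNorm (fun i : (Finset.univ.map e : Finset ι) => x i) =
      hammingNorm fun k => x (e k) := by
  simp only [hammingNorm, Finset.card_filter]
  exact (Finset.sum_coe_sort _ fun i => if x i ≠ 0 then 1 else 0).trans (Finset.sum_map ..)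

variable [Fintype ι]

theorem card_filter_eq_zero_add_hammingNorm (x : ι → R) :
    (Finset.univ.filter fun i => x i = 0).card + hammingNorm x = Fintype.card ι :=
  Finset.card_filter_add_card_filter_not _

theorem hammingNorm_eq_card {x : ι → R} (hx : ∀ i, x i ≠ 0) :
    hammingNorm x = Fintype.card ι := by
  simp [hammingNorm, hx]

theorem hammingNorm_prod (x : κ × ι → R) :
    hammingNorm x = ∑ t, hammingNorm fun j => x (j, t) := by
  simp only [hammingNorm, Finset.card_filter, Fintype.sum_prod_type_right]

end HammingNorm

theorem finrank_submodulePi {K ι : Type*} {V : ι → Type*} [DivisionRing K] [Fintype ι]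
    [∀ i, AddCommGroup (V i)] [∀ i, Module K (V i)] [∀ i, FiniteDimensional K (V i)]
    (p : ∀ i, Submodule K (V i)) :
    Module.finrank K (Submodule.pi Set.univ p) = ∑ i, Module.finrank K (p i) := by
  let inclusion : (∀ i, p i) →ₗ[K] ∀ i, V i :=
    LinearMap.pi fun i => (p i).subtype ∘ₗ LinearMap.proj i
  have range_inclusion : LinearMap.range inclusion = Submodule.pi Set.univ p := by
    ext x
    exact ⟨fun ⟨y, hy⟩ i _ => hy ▸ (y i).2, fun hx => ⟨fun i => ⟨x i, hx i trivial⟩, rfl⟩⟩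
  have inclusion_injective : Function.Injective inclusion := fun x y h =>
    funext fun i => Subtype.ext (congrFun h i)
  rw [← range_inclusion, LinearMap.finrank_range_of_inj inclusion_injective,
    Module.finrank_pi_fintype]

theorem exists_ne_zero_forall_gt_eq_zero {α V : Type*} [LinearOrder α] [Finite α] [Zero V]
    {c : α → V} (hc : c ≠ 0) : ∃ i, c i ≠ 0 ∧ ∀ ℓ, i < ℓ → c ℓ = 0 := by
  obtain ⟨i, hi⟩ := (Set.toFinite {i | c i ≠ 0}).exists_maximal (Function.ne_iff.1 hc)
  exact ⟨i, hi.prop, fun ℓ hℓ => not_not.1 (hi.not_prop_of_gt hℓ)⟩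

section Codes

variable {F ι κ : Type} [Field F] [DecidableEq F] [Fintype ι] [Fintype κ]

theorem minWtGe.mono {C D : Submodule F (ι → F)} {d : ℕ} (hD : minWtGe D d) (h : C ≤ D) :
    minWtGe C d :=
  fun c hc => hD c (h hc)

theorem minWtGe_span_singleton {w : ι → F} (hw : ∀ i, w i ≠ 0) :
    minWtGe (Submodule.span F {w}) (Fintype.card ι) := by
  intro c hc hc0
  obtain ⟨x, rfl⟩ := Submodule.mem_span_singleton.1 hc
  have hx : x ≠ 0 := fun h => hc0 (by rw [h, zero_smul])
  exact (hammingNorm_eq_card fun i => mul_ne_zero hx (hw i)).ge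

theorem symbolHasLocality_of_embedding {C : Submodule F (ι → F)} {r δ : ℕ} (e : κ ↪ ι)
    (hcard : Fintype.card κ ≤ r + δ - 1) (hC : minWtGe (C.map (LinearMap.funLeft F F e)) δ)
    (k : κ) : symbolHasLocality C r δ (e k) := by
  refine ⟨Finset.univ.map e, by simp, by simpa using hcard, ?_⟩
  rintro _ ⟨c, hc, rfl⟩ hc0
  have norm_eq := hammingNorm_restrict_map e c
  rw [← hammingNorm_ne_zero_iff] at hc0
  change δ ≤ hammingNorm fun i : (Finset.univ.map e : Finset ι) => c i
  rw [norm_eq]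
  exact hC _ ⟨c, hc, rfl⟩ (hammingNorm_ne_zero_iff.1 (norm_eq ▸ hc0))

end Codes

section NSC

open scoped Matrix

variable {F : Type} [Field F] {M N : ℕ} {A : Matrix (Fin M) (Fin N) F}

theorem IsNSC.eq_zero_of_vecMul_eq_zero (hA : IsNSC A) {i : ℕ} (hi : i ≤ M) {x : Fin M → F}
    (hx : ∀ ℓ : Fin M, i ≤ ℓ → x ℓ = 0) {f : Fin i → Fin N} (hf : StrictMono f)
    (h : ∀ b, (x ᵥ* A) (f b) = 0) : x = 0 := by
  obtain ⟨k, rfl⟩ := Nat.exists_eq_add_of_le hi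
  have x_natAdd (b : Fin k) : x (Fin.natAdd i b) = 0 := hx _ (by simp)
  have x_castAdd : (fun b : Fin i => x (Fin.castAdd k b)) = 0 := by
    refine Matrix.eq_zero_of_vecMul_eq_zero (hA i hi f hf) (funext fun b => ?_)
    have hb := h b
    simp only [Matrix.vecMul, dotProduct, Fin.sum_univ_add, x_natAdd, zero_mul,
      Finset.sum_const_zero, add_zero] at hb
    exact hb
  exact funext (Fin.addCases (congrFun x_castAdd) x_natAdd)

variable [DecidableEq F]

theorem IsNSC.lt_add_hammingNorm_vecMul (hA : IsNSC A) {i : ℕ} (hi : i ≤ M) {x : Fin M → F}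
    (hx : ∀ ℓ : Fin M, i ≤ ℓ → x ℓ = 0) (hx0 : x ≠ 0) : N < i + hammingNorm (x ᵥ* A) := by
  have card_zeros : (Finset.univ.filter fun j => (x ᵥ* A) j = 0).card < i := by
    by_contra! h
    obtain ⟨s, hs, hsi⟩ := Finset.exists_subset_card_eq h
    refine hx0 (hA.eq_zero_of_vecMul_eq_zero hi hx (s.orderEmbOfFin hsi).strictMono fun b => ?_)
    exact (Finset.mem_filter.1 (hs (s.orderEmbOfFin_mem hsi b))).2
  have := card_filter_eq_zero_add_hammingNorm (x ᵥ* A)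
  rw [Fintype.card_fin] at this
  omega

theorem exists_ne_zero_add_hammingNorm_vecMul_le (A : Matrix (Fin M) (Fin N) F) (hM : 0 < M)
    (hMN : M ≤ N) : ∃ x : Fin M → F, x ≠ 0 ∧ M + hammingNorm (x ᵥ* A) ≤ N + 1 := by
  let firstCols : Fin (M - 1) → Fin N := Fin.castLE (by omega)
  have ker_ne_bot : LinearMap.ker (A.submatrix id firstCols).vecMulLinear ≠ ⊥ :=
    LinearMap.ker_ne_bot_of_finrank_lt (by simpa using hM)
  obtain ⟨x, hx, hx0⟩ := (Submodule.ne_bot_iff _).1 ker_ne_bot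
  refine ⟨x, hx0, ?_⟩
  have card_zeros : M - 1 ≤ (Finset.univ.filter fun j => (x ᵥ* A) j = 0).card := by
    rw [← Fintype.card_fin (M - 1), ← Finset.card_univ]
    exact Finset.card_le_card_of_injOn firstCols
      (fun b _ => Finset.mem_filter.2 ⟨Finset.mem_univ _, congrFun hx b⟩)
      (Fin.castLE_injective _).injOn
  have := card_filter_eq_zero_add_hammingNorm (x ᵥ* A)
  rw [Fintype.card_fin] at this
  omega

theorem IsNSC.exists_hammingNorm_vecMul_eq (hA : IsNSC A) (hM : 0 < M) (hMN : M ≤ N) :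
    ∃ x : Fin M → F, hammingNorm (x ᵥ* A) = N - M + 1 := by
  obtain ⟨x, hx0, hx⟩ := exists_ne_zero_add_hammingNorm_vecMul_le A hM hMN
  have := hA.lt_add_hammingNorm_vecMul le_rfl (fun ℓ hℓ => absurd ℓ.2 hℓ.not_gt) hx0
  exact ⟨x, by omega⟩

end NSC

section MatrixProductCode

open scoped Matrix

variable {F ι : Type} [Field F] [Fintype ι] {M N : ℕ} {A : Matrix (Fin M) (Fin N) F}

theorem mpMap_apply (c : Fin M → ι → F) (j : Fin N) (t : ι) :
    mpMap A c (j, t) = ((fun ℓ => c ℓ t) ᵥ* A) j :=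
  rfl

theorem map_funLeft_matrixProductCode_le {Cs : Fin M → Submodule F (ι → F)}
    {C : Submodule F (ι → F)} (hC : ∀ ℓ, Cs ℓ ≤ C) (j : Fin N) :
    (matrixProductCode Cs A).map (LinearMap.funLeft F F (Prod.mk j)) ≤ C := by
  rintro _ ⟨_, ⟨c, hc, rfl⟩, rfl⟩
  have block_eq : LinearMap.funLeft F F (Prod.mk j) (mpMap A c) = ∑ ℓ, A ℓ j • c ℓ := by
    ext t
    simp [LinearMap.funLeft_apply, mpMap, mul_comm]
  rw [block_eq]
  exact C.sum_mem fun ℓ _ => C.smul_mem _ (hC ℓ (hc ℓ trivial))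

theorem IsNSC.mpMap_injective (hA : IsNSC A) (hMN : M ≤ N) :
    Function.Injective (mpMap (ι := ι) A) := by
  classical
  refine LinearMap.ker_eq_bot.1 (LinearMap.ker_eq_bot'.2 fun c hc => ?_)
  ext ℓ t
  by_contra hℓ
  have weight := hA.lt_add_hammingNorm_vecMul le_rfl (fun ℓ hℓ => absurd ℓ.2 hℓ.not_gt)
    (x := fun ℓ => c ℓ t) fun h => hℓ (congrFun h ℓ)
  have vecMul_eq_zero : (fun ℓ => c ℓ t) ᵥ* A = 0 := funext fun j => congrFun hc (j, t)
  rw [vecMul_eq_zero, hammingNorm_zero] at weight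
  omega

theorem finrank_matrixProductCode (hA : IsNSC A) (hMN : M ≤ N)
    (Cs : Fin M → Submodule F (ι → F)) :
    Module.finrank F (matrixProductCode Cs A) = ∑ ℓ, Module.finrank F (Cs ℓ) := by
  rw [matrixProductCode,
    ← (Submodule.equivMapOfInjective _ (hA.mpMap_injective hMN) _).finrank_eq,
    finrank_submodulePi]

variable [DecidableEq F]

theorem isLRC_matrixProductCode {Cs : Fin M → Submodule F (ι → F)} {C : Submodule F (ι → F)}
    {r δ : ℕ} (hC : ∀ ℓ, Cs ℓ ≤ C) (hCδ : minWtGe C δ) (hcard : Fintype.card ι ≤ r + δ - 1) :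
    IsLRC (matrixProductCode Cs A) r δ := fun ⟨j, t⟩ =>
  symbolHasLocality_of_embedding ⟨Prod.mk j, Prod.mk_right_injective j⟩ hcard
    (hCδ.mono (map_funLeft_matrixProductCode_le hC j)) t

theorem hammingNorm_mpMap (A : Matrix (Fin M) (Fin N) F) (c : Fin M → ι → F) :
    hammingNorm (mpMap A c) = ∑ t, hammingNorm ((fun ℓ => c ℓ t) ᵥ* A) := by
  simp only [hammingNorm_prod, mpMap_apply]

theorem hammingNorm_mpMap_smul (A : Matrix (Fin M) (Fin N) F) (x : Fin M → F) (w : ι → F) :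
    hammingNorm (mpMap A fun ℓ => x ℓ • w) = hammingNorm (x ᵥ* A) * hammingNorm w := by
  have column (t : ι) : hammingNorm ((fun ℓ => (x ℓ • w) t) ᵥ* A) =
      if w t ≠ 0 then hammingNorm (x ᵥ* A) else 0 := by
    have smul_eq : (fun ℓ => (x ℓ • w) t) = w t • x := funext fun ℓ => mul_comm _ _
    rw [smul_eq, Matrix.smul_vecMul]
    split_ifs with ht
    · exact hammingNorm_smul (fun _ => IsSMulRegular.of_ne_zero ht) _
    · rw [not_not.1 ht, zero_smul, hammingNorm_zero]
  rw [hammingNorm_mpMap, Finset.sum_congr rfl fun t _ => column t, ← Finset.sum_filter,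
    Finset.sum_const, smul_eq_mul, mul_comm]
  rfl

theorem IsNSC.mul_hammingNorm_le_hammingNorm_mpMap (hA : IsNSC A) {c : Fin M → ι → F}
    {i : Fin M} (hc : ∀ ℓ, i < ℓ → c ℓ = 0) :
    (N - i) * hammingNorm (c i) ≤ hammingNorm (mpMap A c) := by
  rw [hammingNorm_mpMap, hammingNorm, Finset.card_filter, Finset.mul_sum]
  refine Finset.sum_le_sum fun t _ => ?_
  split_ifs with ht
  · have := hA.lt_add_hammingNorm_vecMul i.2 (x := fun ℓ => c ℓ t)
      (fun ℓ hℓ => congrFun (hc ℓ hℓ) t) fun h => ht (congrFun h i)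
    omega
  · simp

theorem minWtGe_matrixProductCode (hA : IsNSC A) {Cs : Fin M → Submodule F (ι → F)}
    {d : Fin M → ℕ} (hCs : ∀ ℓ, minWtGe (Cs ℓ) (d ℓ)) {D : ℕ}
    (hD : ∀ ℓ : Fin M, D ≤ (N - ℓ) * d ℓ) : minWtGe (matrixProductCode Cs A) D := by
  rintro _ ⟨c, hc, rfl⟩ hc0
  have hc_ne : c ≠ 0 := fun h => hc0 (by rw [h, map_zero])
  obtain ⟨i, hi0, hi⟩ := exists_ne_zero_forall_gt_eq_zero hc_ne
  calc D ≤ (N - i) * d i := hD i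
    _ ≤ (N - i) * hammingNorm (c i) := Nat.mul_le_mul_left _ (hCs i _ (hc i trivial) hi0)
    _ ≤ hammingNorm (mpMap A c) := hA.mul_hammingNorm_le_hammingNorm_mpMap hi

theorem exists_mem_matrixProductCode_hammingNorm_eq (hA : IsNSC A) (hM : 0 < M) (hMN : M ≤ N)
    {Cs : Fin M → Submodule F (ι → F)} {w : ι → F} (hw : ∀ ℓ, w ∈ Cs ℓ) :
    ∃ c ∈ matrixProductCode Cs A, hammingNorm c = (N - M + 1) * hammingNorm w := by
  obtain ⟨x, hx⟩ := hA.exists_hammingNorm_vecMul_eq hM hMN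
  exact ⟨_, ⟨fun ℓ => x ℓ • w, fun ℓ _ => (Cs ℓ).smul_mem _ (hw ℓ), rfl⟩,
    hx ▸ hammingNorm_mpMap_smul A x w⟩

theorem minDistIs_matrixProductCode (hA : IsNSC A) (hM : 0 < M) (hMN : M ≤ N)
    {Cs : Fin M → Submodule F (ι → F)} {w : ι → F} (hw : ∀ ℓ, w ∈ Cs ℓ) (hw0 : w ≠ 0)
    {d : Fin M → ℕ} (hCs : ∀ ℓ, minWtGe (Cs ℓ) (d ℓ))
    (hd : ∀ ℓ : Fin M, (N - M + 1) * hammingNorm w ≤ (N - ℓ) * d ℓ) :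
    minDistIs (matrixProductCode Cs A) ((N - M + 1) * hammingNorm w) := by
  obtain ⟨c, hc, hcw⟩ := exists_mem_matrixProductCode_hammingNorm_eq hA hM hMN hw
  have c_norm_pos : 0 < hammingNorm c :=
    hcw ▸ Nat.mul_pos (Nat.succ_pos _) (hammingNorm_pos_iff.2 hw0)
  exact ⟨⟨c, hc, hammingNorm_pos_iff.1 c_norm_pos, hcw⟩, minWtGe_matrixProductCode hA hCs hd⟩

end MatrixProductCode

section GRS

variable {F : Type} [Field F] {n k : ℕ} {a v : Fin n → F}

theorem GRSCode_one (a v : Fin n → F) : GRSCode 1 a v = Submodule.span F {v} := by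
  have degreeLT_one : Polynomial.degreeLT F 1 = Submodule.span F {1} := by
    classical simp [Polynomial.degreeLT_eq_span_X_pow]
  have grsMap_one : grsMap a v 1 = v := by
    ext i
    simp [grsMap]
  rw [GRSCode, degreeLT_one, Submodule.map_span, Set.image_singleton, grsMap_one]

theorem GRSCode_mono {l : ℕ} (h : k ≤ l) (a v : Fin n → F) : GRSCode k a v ≤ GRSCode l a v :=
  Submodule.map_mono (Polynomial.degreeLT_mono h)

theorem mem_GRSCode (a v : Fin n → F) (hk : 0 < k) : v ∈ GRSCode k a v :=
  GRSCode_mono hk a v (GRSCode_one a v ▸ Submodule.mem_span_singleton_self v)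

theorem lt_add_hammingNorm_grsMap [DecidableEq F] (ha : Function.Injective a)
    (hv : ∀ i, v i ≠ 0) {p : Polynomial F} (hp : p ∈ Polynomial.degreeLT F k) (hp0 : p ≠ 0) :
    n < k + hammingNorm (grsMap a v p) := by
  have card_zeros : (Finset.univ.filter fun i => grsMap a v p i = 0).card < k := by
    by_contra! h
    refine hp0 (Polynomial.eq_zero_of_degree_lt_of_eval_index_eq_zero _ ha.injOn
      ((Polynomial.mem_degreeLT.1 hp).trans_le (Nat.cast_le.2 h)) fun i hi => ?_)
    exact (mul_eq_zero.1 (Finset.mem_filter.1 hi).2).resolve_left (hv i)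
  have := card_filter_eq_zero_add_hammingNorm (grsMap a v p)
  rw [Fintype.card_fin] at this
  omega

theorem minWtGe_GRSCode [DecidableEq F] (ha : Function.Injective a) (hv : ∀ i, v i ≠ 0) :
    minWtGe (GRSCode k a v) (n + 1 - k) := by
  rintro _ ⟨p, hp, rfl⟩ hp0
  have := lt_add_hammingNorm_grsMap ha hv hp fun h => hp0 (by rw [h, map_zero])
  omega

theorem finrank_GRSCode (ha : Function.Injective a) (hv : ∀ i, v i ≠ 0) (hk : k ≤ n) :
    Module.finrank F (GRSCode k a v) = k := by
  have injective : Function.Injective ((grsMap a v).domRestrict (Polynomial.degreeLT F k)) := by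
    classical
    refine LinearMap.ker_eq_bot.1 (LinearMap.ker_eq_bot'.2 fun p hp => ?_)
    by_contra hp0
    have weight := lt_add_hammingNorm_grsMap ha hv p.2 (Subtype.coe_ne_coe.2 hp0)
    have eval_eq_zero : grsMap a v p = 0 := hp
    rw [eval_eq_zero, hammingNorm_zero] at weight
    omega
  rw [GRSCode, ← LinearMap.range_domRestrict, LinearMap.finrank_range_of_inj injective,
    (Polynomial.degreeLTEquiv F k).finrank_eq, Module.finrank_fin_fun]

end GRS

section Optimality

theorem ceil_mul_add_div {m r s : ℕ} (hs : 0 < s) (hsr : s ≤ r) :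
    ⌈((m * r + s : ℕ) : ℚ) / r⌉ = m + 1 := by
  have hr : (0 : ℚ) < r := Nat.cast_pos.2 (hs.trans_le hsr)
  have div_eq : ((m * r + s : ℕ) : ℚ) / r = m + s / r := by
    push_cast
    field_simp
  have ceil_div : ⌈(s : ℚ) / r⌉ = 1 := by
    rw [Int.ceil_eq_iff]
    norm_num [div_le_one hr, hs, hsr, hr]
  rw [div_eq, Int.ceil_natCast_add, ceil_div]

variable {r δ M N : ℕ}

theorem optBound_eq (hr : 0 < r) (hM : 0 < M) (hMN : M ≤ N) :
    optBound (N * (r + δ - 1)) ((M - 1) * r + 1) r δ = ((N - M + 1) * (r + δ - 1) : ℕ) := by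
  rw [optBound, ceil_mul_add_div one_pos hr]
  push_cast [Nat.cast_sub hMN, Nat.cast_sub (show 1 ≤ M from hM),
    Nat.cast_sub (show 1 ≤ r + δ by omega)]
  ring

theorem sum_ite_lt_pred (hM : 0 < M) (k s : ℕ) :
    ∑ ℓ : Fin M, (if (ℓ : ℕ) < M - 1 then k else s) = (M - 1) * k + s := by
  obtain ⟨m, rfl⟩ := Nat.exists_eq_add_one.2 hM
  simp [Fin.sum_univ_castSucc]

theorem mul_length_le_sub_mul {ℓ : ℕ} (hMN : M ≤ N) (hr : 0 < r)
    (hcond : (r - 1) * (N - M + 1) ≤ δ) (hℓ : ℓ < M - 1) :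
    (N - M + 1) * (r + δ - 1) ≤ (N - ℓ) * δ :=
  calc (N - M + 1) * (r + δ - 1) = (N - M + 1) * δ + (r - 1) * (N - M + 1) := by
        rw [show r + δ - 1 = δ + (r - 1) by omega]
        ring
    _ ≤ (N - M + 1) * δ + δ := Nat.add_le_add_left hcond _
    _ = (N - M + 2) * δ := by ring
    _ ≤ (N - ℓ) * δ := Nat.mul_le_mul_right _ (by omega)

theorem grs_matrixProduct_optimal_general {F ι : Type} [Field F] [DecidableEq F] [Fintype ι]
    (hr : 0 < r) (hδ : 0 < δ) (hM : 0 < M) (hMN : M ≤ N)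
    (hcard : Fintype.card ι = r + δ - 1) {C : Submodule F (ι → F)}
    (hCr : Module.finrank F C = r) (hCδ : minWtGe C δ)
    {w : ι → F} (hwC : w ∈ C) (hw : ∀ i, w i ≠ 0)
    {A : Matrix (Fin M) (Fin N) F} (hA : IsNSC A) (hcond : (r - 1) * (N - M + 1) ≤ δ) :
    IsOptimalLRC
      (matrixProductCode
        (fun ℓ : Fin M => if (ℓ : ℕ) < M - 1 then C else Submodule.span F {w}) A)
      ((M - 1) * r + 1) ((N - M + 1) * (r + δ - 1)) r δ := by
  have span_le : Submodule.span F {w} ≤ C := (Submodule.span_singleton_le_iff_mem w C).2 hwC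
  have weight_w : hammingNorm w = r + δ - 1 := (hammingNorm_eq_card hw).trans hcard
  have w_ne_zero : w ≠ 0 := hammingNorm_pos_iff.1 (by omega)
  refine ⟨isLRC_matrixProductCode (fun ℓ => ?_) hCδ hcard.le, ?_, ?_, ?_⟩
  · split_ifs
    exacts [le_rfl, span_le]
  · rw [finrank_matrixProductCode hA hMN, ← sum_ite_lt_pred hM]
    refine Finset.sum_congr rfl fun ℓ _ => ?_
    split_ifs with hℓ
    · rw [if_pos hℓ, hCr]
    · rw [if_neg hℓ, finrank_span_singleton w_ne_zero]
  · rw [← weight_w]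
    refine minDistIs_matrixProductCode hA hM hMN (fun ℓ => ?_) w_ne_zero
      (d := fun ℓ => if (ℓ : ℕ) < M - 1 then δ else hammingNorm w) (fun ℓ => ?_) fun ℓ => ?_
    · split_ifs
      exacts [hwC, Submodule.mem_span_singleton_self w]
    · split_ifs
      exacts [hCδ, hammingNorm_eq_card hw ▸ minWtGe_span_singleton hw]
    · split_ifs with hℓ
      exacts [weight_w ▸ mul_length_le_sub_mul hMN hr hcond hℓ,
        Nat.mul_le_mul_right _ (by omega)]
  · rw [Fintype.card_prod, Fintype.card_fin, hcard, optBound_eq hr hM hMN]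

end Optimality

/-- Corollary 1: the matrix-product code of
`C_1 = ⋯ = C_{M-1} = GRS_r(a, v)` and `C_M = GRS_1(a, v)` by an `M × N` NSC matrix,
with `(r-1)(N-M+1) ≤ δ`, is an optimal `(r,δ)`-LRC with parameters
`[N(r+δ-1), (M-1)r+1, (N-M+1)(r+δ-1)]_q`. -/
theorem grs_matrixProduct_optimal
    (q : ℕ) (hq : IsPrimePow q)
    (F : Type) [Field F] [Fintype F] [DecidableEq F] (hF : Fintype.card F = q)
    (r δ M N : ℕ) (hδ : 1 < δ) (hr : 0 < r) (hM : 1 < M) (hMN : M < N) (hNq : N ≤ q)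
    (hmq : r + δ - 1 ≤ q)
    (a v : Fin (r + δ - 1) → F) (ha : Function.Injective a) (hv : ∀ i, v i ≠ 0)
    (A : Matrix (Fin M) (Fin N) F) (hA : IsNSC A)
    (hcond : (r - 1) * (N - M + 1) ≤ δ) :
    IsOptimalLRC
      (matrixProductCode
        (fun i : Fin M => if (i : ℕ) < M - 1 then GRSCode r a v else GRSCode 1 a v) A)
      ((M - 1) * r + 1) ((N - M + 1) * (r + δ - 1)) r δ := by
  have dist_eq : r + δ - 1 + 1 - r = δ := by omega
  simp only [GRSCode_one]
  exact grs_matrixProduct_optimal_general hr (by omega) (by omega) hMN.le (Fintype.card_fin _)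
    (finrank_GRSCode ha hv (by omega))
    (by simpa only [dist_eq] using minWtGe_GRSCode (k := r) ha hv) (mem_GRSCode a v hr)
    hv hA hcond

end LRCPaper
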